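/- arXiv:2210.10613 — 4 statements merged into one kernel-verified Lean document; each statement's English description precedes it below -/
import Mathlib

section
/- Let lb < hb be real numbers and m a positive natural number. Let x, y : Fin m → ℝ be monotone (non-decreasing) tuples with lb ≤ x i ≤ hb and lb ≤ y i ≤ hb for all i. If for every natural number k with 0 ≤ k ≤ m we have ∑_{i} ((x i − lb)/(hb − lb))^k = ∑_{i} ((y i − lb)/(hb − lb))^k, then x = y. In other words, the sum-of-power mapping E(x) = [∑_i ((x_i−lb)/(hb−lb))^0, …, ∑_i ((x_i−lb)/(hb−lb))^m] is injective on the set of non-decreasing m-tuples with entries in [lb, hb]. -/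
theorem aux_monotone_psum {m : ℕ} (u v : Fin m → ℝ) (hu : Monotone u) (hv : Monotone v)
    (h : ∀ k : ℕ, k ≤ m → ∑ i, u i ^ k = ∑ i, v i ^ k) : u = v := by
  have he : ∀ k : ℕ, k ≤ m → MvPolynomial.aeval u (MvPolynomial.esymm (Fin m) ℝ k)
      = MvPolynomial.aeval v (MvPolynomial.esymm (Fin m) ℝ k) := by
    intro k
    induction k using Nat.strong_induction_on with
    | _ k ih =>
      intro hk
      rcases Nat.eq_zero_or_pos k with rfl | hpos
      · simp
      have hk0 : (k : ℝ) ≠ 0 := by positivity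
      have h1 := congrArg (MvPolynomial.aeval u) (MvPolynomial.mul_esymm_eq_sum (Fin m) ℝ k)
      have h2 := congrArg (MvPolynomial.aeval v) (MvPolynomial.mul_esymm_eq_sum (Fin m) ℝ k)
      simp only [map_mul, map_natCast, map_pow, map_neg, map_one, map_sum, MvPolynomial.psum,
        MvPolynomial.aeval_X] at h1 h2
      apply mul_left_cancel₀ hk0
      rw [h1, h2]
      congr 1
      apply Finset.sum_congr rfl
      intro a ha
      simp only [Finset.mem_filter, Finset.HasAntidiagonal.mem_antidiagonal] at ha
      rw [ih a.1 ha.2 (by omega), h a.2 (by omega)]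
  simp only [MvPolynomial.aeval_esymm_eq_multiset_esymm] at he
  have hm : Finset.univ.val.map u = Finset.univ.val.map v := by
    rw [← Polynomial.roots_multiset_prod_X_sub_C (Finset.univ.val.map u),
      ← Polynomial.roots_multiset_prod_X_sub_C (Finset.univ.val.map v),
      Multiset.prod_X_sub_X_eq_sum_esymm, Multiset.prod_X_sub_X_eq_sum_esymm]
    congr 1
    have hc : ∀ w : Fin m → ℝ, Multiset.card (Finset.univ.val.map w) = m := by intro w; simp
    rw [hc, hc]
    apply Finset.sum_congr rfl
    intro j hj
    rw [he j (by simp only [Finset.mem_range] at hj; omega)]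
  rw [Fin.univ_val_map, Fin.univ_val_map, Multiset.coe_eq_coe] at hm
  exact List.ofFn_injective (hm.eq_of_sortedLE hu.sortedLE_ofFn hv.sortedLE_ofFn)

/-- Lemma 1 (sum-of-power mapping): the normalized power-sum map is injective
on non-decreasing m-tuples with entries in [lb, hb]. -/
theorem sum_of_power_mapping_injective
    (lb hb : ℝ) (hlt : lb < hb) (m : ℕ) (hm : 0 < m)
    (x y : Fin m → ℝ) (hx : Monotone x) (hy : Monotone y)
    (hxmem : ∀ i, lb ≤ x i ∧ x i ≤ hb) (hymem : ∀ i, lb ≤ y i ∧ y i ≤ hb)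
    (h : ∀ k : ℕ, k ≤ m →
      ∑ i, ((x i - lb) / (hb - lb)) ^ k = ∑ i, ((y i - lb) / (hb - lb)) ^ k) :
    x = y := by
  have hd : 0 < hb - lb := sub_pos.mpr hlt
  have hmono : ∀ w : Fin m → ℝ, Monotone w → Monotone (fun i => (w i - lb) / (hb - lb)) := by
    intro w hw i j hij
    have := hw hij
    exact div_le_div_of_nonneg_right (by linarith) hd.le
  have key := aux_monotone_psum _ _ (hmono x hx) (hmono y hy) h
  funext i
  have hi := congrFun key i
  rw [div_left_inj' hd.ne'] at hi
  linarith
end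

section
/- Let m and M be positive natural numbers and let s and t be multisets of vectors in ℝ^m (elements of Fin m → ℝ), each of cardinality M. Suppose that for every coordinate index i, the multiset of i-th coordinates of the members of s equals the multiset of i-th coordinates of the members of t. Then t can be obtained from s by a finite sequence of feature swaps, i.e., s and t are swap-equivalent. -/
/-- A feature swap on a multiset of vectors in ℝ^m: choose two members `u, v`
and a coordinate `i`, and replace them by the vectors obtained from `u` and `v`
by exchanging their `i`-th coordinates. -/
def FeatureSwap (m : ℕ) (s t : Multiset (Fin m → ℝ)) : Prop :=
  ∃ (u v : Fin m → ℝ) (i : Fin m) (r : Multiset (Fin m → ℝ)),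
    s = u ::ₘ v ::ₘ r ∧
    t = (Function.update u i (v i)) ::ₘ (Function.update v i (u i)) ::ₘ r

theorem FeatureSwap.map_eq {m : ℕ} {s t : Multiset (Fin m → ℝ)} (h : FeatureSwap m s t)
    (j : Fin m) : s.map (fun x => x j) = t.map (fun x => x j) := by
  obtain ⟨u, v, i, r, rfl, rfl⟩ := h
  by_cases hij : j = i
  · subst hij
    simp [Multiset.cons_swap]
  · simp [Function.update_of_ne hij]

theorem FeatureSwap.reach_map_eq {m : ℕ} {s t : Multiset (Fin m → ℝ)}
    (h : Relation.ReflTransGen (FeatureSwap m) s t)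
    (j : Fin m) : s.map (fun x => x j) = t.map (fun x => x j) := by
  induction h with
  | refl => rfl
  | tail _ hb ih => exact ih.trans (hb.map_eq j)

theorem FeatureSwap.card_eq {m : ℕ} {s t : Multiset (Fin m → ℝ)}
    (h : Relation.ReflTransGen (FeatureSwap m) s t) : s.card = t.card := by
  induction h with
  | refl => rfl
  | tail _ hb ih =>
    obtain ⟨u, v, i, r, rfl, rfl⟩ := hb
    simpa using ih

theorem FeatureSwap.reach_cons {m : ℕ} (w : Fin m → ℝ) {s t : Multiset (Fin m → ℝ)}
    (h : Relation.ReflTransGen (FeatureSwap m) s t) :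
    Relation.ReflTransGen (FeatureSwap m) (w ::ₘ s) (w ::ₘ t) := by
  induction h with
  | refl => exact .refl
  | tail _ hb ih =>
    refine ih.tail ?_
    obtain ⟨u, v, i, r, rfl, rfl⟩ := hb
    refine ⟨u, v, i, w ::ₘ r, ?_, ?_⟩
    · rw [Multiset.cons_swap w u, Multiset.cons_swap w v]
    · rw [Multiset.cons_swap w, Multiset.cons_swap w]

theorem FeatureSwap.exists_agree {m : ℕ} (w : Fin m → ℝ) (s : Multiset (Fin m → ℝ))
    (hs : s ≠ 0) (h : ∀ i, w i ∈ s.map (fun x => x i)) (I : Finset (Fin m)) :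
    ∃ u r, Relation.ReflTransGen (FeatureSwap m) s (u ::ₘ r) ∧ ∀ i ∈ I, u i = w i := by
  induction I using Finset.induction_on with
  | empty =>
    obtain ⟨u, hu⟩ := Multiset.exists_mem_of_ne_zero hs
    obtain ⟨r, rfl⟩ := Multiset.exists_cons_of_mem hu
    exact ⟨u, r, .refl, by simp⟩
  | insert i I hi ih =>
    obtain ⟨u, r, hr, hu⟩ := ih
    have hw := h i
    rw [FeatureSwap.reach_map_eq hr i, Multiset.mem_map] at hw
    obtain ⟨v, hv, hvi⟩ := hw
    rcases Multiset.mem_cons.1 hv with rfl | hv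
    · refine ⟨v, r, hr, fun j hj => ?_⟩
      rcases Finset.mem_insert.1 hj with rfl | hj
      · exact hvi
      · exact hu j hj
    · obtain ⟨r, rfl⟩ := Multiset.exists_cons_of_mem hv
      refine ⟨_, _, hr.tail ⟨u, v, i, r, rfl, rfl⟩, fun j hj => ?_⟩
      rcases Finset.mem_insert.1 hj with rfl | hj
      · simpa using hvi
      · rw [Function.update_of_ne (show j ≠ i from fun e => hi (e ▸ hj))]
        exact hu j hj

theorem FeatureSwap.main {m : ℕ} (t : Multiset (Fin m → ℝ)) :
    ∀ s : Multiset (Fin m → ℝ), s.card = t.card →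
    (∀ i : Fin m, s.map (fun x => x i) = t.map (fun x => x i)) →
    Relation.ReflTransGen (FeatureSwap m) s t := by
  induction t using Multiset.induction_on with
  | empty =>
    intro s hc _
    rw [Multiset.card_zero, Multiset.card_eq_zero] at hc
    rw [hc]
  | cons w t ih =>
    intro s hc h
    have hs : s ≠ 0 := by
      rintro rfl
      simp at hc
    obtain ⟨u, r, hr, hu⟩ := FeatureSwap.exists_agree w s hs
      (fun i => by rw [h i]; simp) Finset.univ
    obtain rfl : u = w := funext fun i => hu i (Finset.mem_univ i)
    refine hr.trans (FeatureSwap.reach_cons u (ih r ?_ fun i => ?_))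
    · have := FeatureSwap.card_eq hr
      rw [hc] at this
      simpa using this.symm
    · have := FeatureSwap.reach_map_eq hr i
      rw [h i] at this
      simpa using this.symm

/-- If two multisets of M vectors in ℝ^m have, for every coordinate, the same
multiset of that coordinate's values, then one can be obtained from the other
by a finite sequence of feature swaps. -/
theorem swapEquivalent_of_coordinateMultisets_eq
    (m M : ℕ) (hm : 0 < m) (hM : 0 < M)
    (s t : Multiset (Fin m → ℝ))
    (hsc : Multiset.card s = M) (htc : Multiset.card t = M)
    (h : ∀ i : Fin m, s.map (fun x => x i) = t.map (fun x => x i)) :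
    Relation.ReflTransGen (FeatureSwap m) s t := by
  exact FeatureSwap.main t s (hsc.trans htc.symm) h
end

section
/- Let lb < hb be real numbers, let m, N be positive natural numbers, and let n be a natural number with n ≥ N. For a multiset s of vectors in [lb, hb]^m (elements x : Fin m → ℝ with lb ≤ x i ≤ hb), define its encoding to consist of: for each coordinate index i and each degree k with 0 ≤ k ≤ n, the normalized power sum ∑_{x ∈ s} ((x i − lb)/(hb − lb))^k, together with the cardinality of s. Then this encoding is injective up to feature swaps: if s and t are two such multisets, each of cardinality at least 1 and at most N, whose encodings are equal, then s.card = t.card and for every coordinate index i the multiset of i-th coordinates of s equals the multiset of i-th coordinates of t (equivalently, s and t are swap-equivalent). -/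
/-- The encoding of a multiset `s` of vectors in ℝ^m: for each coordinate `i`
and each degree `k ≤ n`, the normalized power sum
`∑_{x ∈ s} ((x i − lb)/(hb − lb))^k`, together with the cardinality of `s`. -/
noncomputable def dynamicSetEncoding (lb hb : ℝ) (m n : ℕ) (s : Multiset (Fin m → ℝ)) :
    (Fin m → Fin (n + 1) → ℝ) × ℕ :=
  (fun i k => (s.map (fun x => ((x i - lb) / (hb - lb)) ^ (k : ℕ))).sum,
   Multiset.card s)

theorem fin_psum_esymm (d : ℕ) (a b : Fin d → ℝ)
    (h : ∀ k ≤ d, ∑ i, a i ^ k = ∑ i, b i ^ k) (k : ℕ) (hk : k ≤ d) :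
    MvPolynomial.aeval a (MvPolynomial.esymm (Fin d) ℝ k)
      = MvPolynomial.aeval b (MvPolynomial.esymm (Fin d) ℝ k) := by
  induction k using Nat.strong_induction_on with
  | _ k ih =>
    rcases Nat.eq_zero_or_pos k with rfl | hpos
    · simp
    have hN := MvPolynomial.mul_esymm_eq_sum (Fin d) ℝ k
    have ha := congrArg (MvPolynomial.aeval a) hN
    have hb := congrArg (MvPolynomial.aeval b) hN
    have hp : ∀ j ≤ d, MvPolynomial.aeval a (MvPolynomial.psum (Fin d) ℝ j)
      = MvPolynomial.aeval b (MvPolynomial.psum (Fin d) ℝ j) := by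
      intro j hj
      simpa [MvPolynomial.psum] using h j hj
    simp only [map_mul, map_sum, map_pow, map_neg, map_one, map_natCast] at ha hb
    have hk0 : (k : ℝ) ≠ 0 := by exact_mod_cast hpos.ne'
    apply mul_left_cancel₀ hk0
    rw [ha, hb]
    congr 1
    apply Finset.sum_congr rfl
    intro x hx
    have hx := Finset.mem_filter.mp hx
    have hsum : x.1 + x.2 = k := Finset.HasAntidiagonal.mem_antidiagonal.mp hx.1
    rw [ih x.1 hx.2 (by omega), hp x.2 (by omega)]

theorem multiset_eq_of_psum (s t : Multiset ℝ) (hc : Multiset.card s = Multiset.card t)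
    (h : ∀ k ≤ Multiset.card s, (s.map (· ^ k)).sum = (t.map (· ^ k)).sum) : s = t := by
  obtain ⟨d, hd⟩ : ∃ d, Multiset.card s = d := ⟨_, rfl⟩
  have key : ∀ u : Multiset ℝ, Multiset.card u = d →
      ∃ a : Fin d → ℝ, u = (Finset.univ.val.map a) := by
    intro u hu
    obtain ⟨l, rfl⟩ := Quot.exists_rep u
    have hl : l.length = d := hu
    subst hl
    refine ⟨l.get, ?_⟩
    rw [Fin.univ_val_map, List.ofFn_get]
    rfl
  obtain ⟨a, rfl⟩ := key s hd
  obtain ⟨b, rfl⟩ := key t (hc ▸ hd)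
  have h' : ∀ k ≤ d, ∑ i, a i ^ k = ∑ i, b i ^ k := by
    intro k hk
    have h3 := h k (by simpa using hk)
    rw [Multiset.map_map, Multiset.map_map] at h3
    exact h3
  have he := fin_psum_esymm d a b h'
  simp only [MvPolynomial.aeval_esymm_eq_multiset_esymm] at he
  rw [← Polynomial.roots_multiset_prod_X_sub_C (Finset.univ.val.map a),
    ← Polynomial.roots_multiset_prod_X_sub_C (Finset.univ.val.map b),
    Multiset.prod_X_sub_X_eq_sum_esymm, Multiset.prod_X_sub_X_eq_sum_esymm, ← hc]
  congr 1
  apply Finset.sum_congr rfl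
  intro j hj
  rw [he j (by simp at hj; omega)]

/-- Lemma 2 (dynamic vector set mapping): the encoding is injective up to
feature swaps, i.e. equal encodings force equal cardinalities and equal
per-coordinate multisets. -/
theorem dynamicSetEncoding_injective_up_to_swaps
    (lb hb : ℝ) (hlt : lb < hb) (m N : ℕ) (hm : 0 < m) (hN : 0 < N)
    (n : ℕ) (hn : N ≤ n)
    (s t : Multiset (Fin m → ℝ))
    (hs : ∀ x ∈ s, ∀ i, lb ≤ x i ∧ x i ≤ hb)
    (ht : ∀ x ∈ t, ∀ i, lb ≤ x i ∧ x i ≤ hb)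
    (hsc1 : 1 ≤ Multiset.card s) (hscN : Multiset.card s ≤ N)
    (htc1 : 1 ≤ Multiset.card t) (htcN : Multiset.card t ≤ N)
    (henc : dynamicSetEncoding lb hb m n s = dynamicSetEncoding lb hb m n t) :
    Multiset.card s = Multiset.card t ∧
      ∀ i : Fin m, s.map (fun x => x i) = t.map (fun x => x i) := by
  have h1 := congrArg Prod.fst henc
  have h2 : Multiset.card s = Multiset.card t := congrArg Prod.snd henc
  refine ⟨h2, fun i => ?_⟩
  have hne : hb - lb ≠ 0 := (sub_pos.mpr hlt).ne'
  have key : s.map (fun x => (x i - lb) / (hb - lb)) = t.map (fun x => (x i - lb) / (hb - lb)) := by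
    apply multiset_eq_of_psum
    · simpa using h2
    · intro k hk
      rw [Multiset.card_map] at hk
      have := congrFun (congrFun h1 i) ⟨k, by omega⟩
      simpa [dynamicSetEncoding, Multiset.map_map, Function.comp_def] using this
  have := congrArg (Multiset.map (fun y => y * (hb - lb) + lb)) key
  simpa [Multiset.map_map, Function.comp_def, div_mul_cancel₀ _ hne] using this
end

section
/- Let lb < hb be real numbers, let d₂, N be positive natural numbers, let n be a natural number with n ≥ N, and set d₃ = d₂·(n + 1) + 1. Then there exists a function h : ℝ^{d₂} × ℝ → ℝ^{d₃} (an 'embedding network' taking a participant vector and its attention weight) with the following property: for any two finite indexed families of vectors x¹, …, x^{M₁} and z¹, …, z^{M₂} in [lb, hb]^{d₂} with 1 ≤ M₁, M₂ ≤ N, and any strictly positive weights w₁, …, w_{M₁} and v₁, …, v_{M₂} each summing to 1, if the weighted encodings agree, i.e. ∑_{j=1}^{M₁} w_j · h(xʲ, w_j) = ∑_{j=1}^{M₂} v_j · h(zʲ, v_j), then M₁ = M₂ and for every coordinate index i the multiset of i-th coordinates {x¹_i, …, x^{M₁}_i} equals the multiset {z¹_i, …, z^{M₂}_i}. One valid choice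 is h(x, ω) = (1/ω)·[((x_1−lb)/(hb−lb))^0, …, ((x_1−lb)/(hb−lb))^n, …, ((x_{d₂}−lb)/(hb−lb))^0, …, ((x_{d₂}−lb)/(hb−lb))^n, 1]ᵀ, for which ∑_j w_j·h(xʲ, w_j) equals the vector of all normalized per-coordinate power sums of degrees 0,…,n together with the cardinality M₁. -/
open MvPolynomial in
theorem abe_esymm_eq (M : ℕ) (a b : Fin M → ℝ)
    (hab : ∀ k ≤ M, ∑ j, a j ^ k = ∑ j, b j ^ k) :
    ∀ k ≤ M, aeval a (esymm (Fin M) ℝ k) = aeval b (esymm (Fin M) ℝ k) := by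
  intro k
  induction k using Nat.strong_induction_on with
  | _ k ih =>
    intro hk
    rcases Nat.eq_zero_or_pos k with rfl | hpos
    · simp
    have ha := congrArg (aeval a) (mul_esymm_eq_sum (Fin M) ℝ k)
    have hb := congrArg (aeval b) (mul_esymm_eq_sum (Fin M) ℝ k)
    have key : (k : ℝ) * aeval a (esymm (Fin M) ℝ k) = k * aeval b (esymm (Fin M) ℝ k) := by
      simp only [map_mul, map_natCast, map_pow, map_neg, map_one, map_sum] at ha hb
      rw [ha, hb]
      congr 1
      refine Finset.sum_congr rfl fun p hp => ?_
      rw [Finset.mem_filter] at hp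
      have hp1 : p.1 + p.2 = k := Finset.HasAntidiagonal.mem_antidiagonal.1 hp.1
      rw [ih p.1 hp.2 (by omega)]
      have := hab p.2 (by omega)
      simp only [psum, map_sum, map_pow, aeval_X, this]
    exact mul_left_cancel₀ (by positivity) key

theorem abe_multiset_eq (M : ℕ) (a b : Fin M → ℝ)
    (hab : ∀ k ≤ M, ∑ j, a j ^ k = ∑ j, b j ^ k) :
    Multiset.map a Finset.univ.val = Multiset.map b Finset.univ.val := by
  rw [← Polynomial.roots_multiset_prod_X_sub_C (Multiset.map a Finset.univ.val),
    ← Polynomial.roots_multiset_prod_X_sub_C (Multiset.map b Finset.univ.val),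
    Multiset.prod_X_sub_X_eq_sum_esymm, Multiset.prod_X_sub_X_eq_sum_esymm]
  congr 1
  simp only [Multiset.card_map, Finset.card_val, Finset.card_univ, Fintype.card_fin]
  refine Finset.sum_congr rfl fun k hk => ?_
  have := abe_esymm_eq M a b hab k (by simpa [Nat.lt_succ_iff] using hk)
  rw [MvPolynomial.aeval_esymm_eq_multiset_esymm,
    MvPolynomial.aeval_esymm_eq_multiset_esymm] at this
  rw [this]

/-- Theorem 1: there exists an embedding network `h` (taking a participant
vector and its attention weight) with values in ℝ^{d₂·(n+1)+1} such that the
attention-weighted encoding `∑_j w_j • h(xʲ, w_j)` is injective on families of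
vectors in [lb, hb]^{d₂} of cardinality between 1 and N with positive weights
summing to 1, up to feature swaps (equality of all per-coordinate multisets). -/
theorem attention_based_encoding_injective
    (lb hb : ℝ) (hlt : lb < hb) (d₂ N : ℕ) (hd : 0 < d₂) (hN : 0 < N)
    (n : ℕ) (hn : N ≤ n) :
    ∃ h : (Fin d₂ → ℝ) × ℝ → (Fin (d₂ * (n + 1) + 1) → ℝ),
      ∀ (M₁ M₂ : ℕ), 1 ≤ M₁ → M₁ ≤ N → 1 ≤ M₂ → M₂ ≤ N →
      ∀ (x : Fin M₁ → Fin d₂ → ℝ) (z : Fin M₂ → Fin d₂ → ℝ),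
      (∀ j i, lb ≤ x j i ∧ x j i ≤ hb) →
      (∀ j i, lb ≤ z j i ∧ z j i ≤ hb) →
      ∀ (w : Fin M₁ → ℝ) (v : Fin M₂ → ℝ),
      (∀ j, 0 < w j) → (∀ j, 0 < v j) →
      (∑ j, w j) = 1 → (∑ j, v j) = 1 →
      (∑ j, w j • h (x j, w j)) = (∑ j, v j • h (z j, v j)) →
      M₁ = M₂ ∧
        ∀ i : Fin d₂,
          Multiset.map (fun j => x j i) Finset.univ.val =
          Multiset.map (fun j => z j i) Finset.univ.val := by
  refine ⟨fun p => Fin.snoc (α := fun _ => ℝ)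
    (fun q : Fin (d₂ * (n + 1)) => (1 / p.2) *
      ((p.1 (finProdFinEquiv.symm q).1 - lb) / (hb - lb)) ^ ((finProdFinEquiv.symm q).2 : ℕ))
    (1 / p.2), ?_⟩
  intro M₁ M₂ _ hM₁ _ _ x z _ _ w v hw hv _ _ heq
  have hM : M₁ = M₂ := by
    have h1 := congrFun heq (Fin.last _)
    simp only [Finset.sum_apply, Pi.smul_apply, Fin.snoc_last, smul_eq_mul] at h1
    rw [Finset.sum_congr rfl fun j _ => mul_one_div_cancel (hw j).ne',
      Finset.sum_congr rfl fun j _ => mul_one_div_cancel (hv j).ne'] at h1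
    simpa using h1
  subst hM
  refine ⟨rfl, fun i => ?_⟩
  have hne : hb - lb ≠ 0 := (sub_pos.2 hlt).ne'
  have hm := abe_multiset_eq M₁ (fun j => (x j i - lb) / (hb - lb))
    (fun j => (z j i - lb) / (hb - lb)) (fun k hk => by
      have h1 := congrFun heq
        (Fin.castSucc (finProdFinEquiv (i, (⟨k, by omega⟩ : Fin (n + 1)))))
      simp only [Finset.sum_apply, Pi.smul_apply, Fin.snoc_castSucc, smul_eq_mul,
        Equiv.symm_apply_apply, ← mul_assoc] at h1
      simpa only [mul_one_div_cancel (hw _).ne', mul_one_div_cancel (hv _).ne', one_mul] using h1)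
  have hm2 := congrArg (Multiset.map fun t => t * (hb - lb) + lb) hm
  simpa only [Multiset.map_map, Function.comp_def, div_mul_cancel₀ _ hne, sub_add_cancel] using hm2
end
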